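/- Let x, y ∈ O(m,n) with m ≥ 1 and 1 ≤ k ≤ m, and suppose x∂_{k−1} = y∂_k. Then x▽_k y ∈ O(m+1,n) and x⋆_k y ∈ O(m,n); that is, the subsets O(m,n) ⊆ ℤΔ([m],[n]) are closed under the operations ▽_k and ⋆_k. -/

import Mathlib

/-!
Write `w = x ▽ₖ y` and `z = x∂ₖ₋₁ = y∂ₖ`. A coefficient `(xβ)_γ` with `γ` injective vanishes
when `β` is not injective (`act_apply_eq_zero`), so for `x` in `O` it is nonnegative for every `β`
(`memO.nonneg`). To see `(wβ)_γ ≥ 0` for injective `β` and `γ`, distinguish which of `k - 1` and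
`k + 1` the operator `β` hits:

* if `β` misses `k + 1`, the terms coming from `z = y∂ₖ` and from `y` cancel, leaving a coefficient
  of `x` (this is the identity `w∂ₖ₊₁ = x`);
* if `β` misses `k - 1`, the terms coming from `z = x∂ₖ₋₁` and from `x` cancel, leaving a
  coefficient of `y` (this is the identity `w∂ₖ₋₁ = y`);
* if `β` hits both, the term coming from `z` vanishes, because the doubly degenerate operator
  identifies `k - 1` and `k + 1`, and the two other terms are nonnegative.

Finally `x ⋆ₖ y = w∂ₖ`, and `O` is closed under precomposition with simplicial operators.
-/

abbrev ZD (a b : ℕ) := (Fin a →o Fin b) →₀ ℤ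

noncomputable def act {a b c : ℕ} (x : ZD b c) (β : Fin a →o Fin b) : ZD a c :=
  Finsupp.mapDomain (fun α => α.comp β) x

def face {m : ℕ} (i : Fin (m+1)) : Fin m →o Fin (m+1) :=
  ⟨i.succAbove, (Fin.succAboveOrderEmb i).monotone⟩

def degen {m : ℕ} (i : Fin m) : Fin (m+1) →o Fin m :=
  ⟨i.predAbove, Fin.predAbove_right_monotone i⟩

def memO {a b : ℕ} (x : ZD a b) : Prop :=
  (x.sum fun _ c => c) = 1 ∧
    ∀ (p : ℕ) (β : Fin (p+1) →o Fin a) (γ : Fin (p+1) →o Fin b),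
      Function.Injective ⇑β → Function.Injective ⇑γ → 0 ≤ act x β γ

/-- The witness operation `x ▽ₖ y`, for `x, y ∈ ℤΔ([m],[n])` and `1 ≤ k ≤ m`. -/
noncomputable def fill {m b : ℕ} (k : ℕ) (h1 : 1 ≤ k) (h2 : k ≤ m)
    (x y : ZD (m+1) b) : ZD (m+2) b :=
  act x (degen ⟨k, by omega⟩)
    - act (act (act x (face ⟨k-1, by omega⟩)) (degen ⟨k-1, by omega⟩)) (degen ⟨k-1, by omega⟩)
    + act y (degen ⟨k-1, by omega⟩)

/-- The pasting operation `x ⋆ₖ y`. -/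
noncomputable def paste {m b : ℕ} (k : ℕ) (h1 : 1 ≤ k) (h2 : k ≤ m)
    (x y : ZD (m+1) b) : ZD (m+1) b :=
  x - act (act x (face ⟨k-1, by omega⟩)) (degen ⟨k-1, by omega⟩) + y

/-- `x` is degenerate at `k`, i.e. `x = y σₖ` for some `y` one dimension lower. -/
def isDegenAt {a b : ℕ} (x : ZD a b) (k : ℕ) : Prop :=
  ∃ (p : ℕ) (hp : a = p + 1) (hk : k < p) (y : ZD p b),
    x = hp ▸ act y (degen ⟨k, hk⟩)

def isDegen {a b : ℕ} (x : ZD a b) : Prop := ∃ k, isDegenAt x k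

/-- The number of preimages of the top element `n` under `α`. -/
def npre {a n : ℕ} (α : Fin a →o Fin (n+1)) : ℕ :=
  (Finset.univ.filter fun i => α i = Fin.last n).card

/-- `x` lies in the simplicial subset `A`: all operators in the support of `x`
have equally many preimages of the top element. -/
def inA {a n : ℕ} (x : ZD a (n+1)) : Prop :=
  ∀ α ∈ x.support, ∀ β ∈ x.support, npre α = npre β

/-- `r` is the rank of `x`: the least `i` such that some `α ∈ supp x` has `α i = n`. -/
def isRank {a n : ℕ} (x : ZD a (n+1)) (r : Fin a) : Prop :=
  IsLeast {i : Fin a | ∃ α ∈ x.support, α i = Fin.last n} r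

/-- `x̌`: the part of `x` supported on operators with `α r < n`. -/
noncomputable def checkPart {a n : ℕ} (x : ZD a (n+1)) (r : Fin a) : ZD a (n+1) :=
  x.filter (fun α => ¬ (α r = Fin.last n))

/-- `x̄`: the part of `x` supported on operators with `α r = n`. -/
noncomputable def barPart {a n : ℕ} (x : ZD a (n+1)) (r : Fin a) : ZD a (n+1) :=
  x.filter (fun α => α r = Fin.last n)

/-- `ℓ` is the level of `x` (with rank `r`). -/
def isLevel {a n : ℕ} (x : ZD a (n+1)) (r ℓ : Fin a) : Prop :=
  IsLeast {i : Fin a | ∀ α ∈ (checkPart x r).support, α i = α r} ℓ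

/-- Condition (†): `x̄` is degenerate at `ℓ - 1`. -/
def dagger {a n : ℕ} (x : ZD a (n+1)) (r ℓ : Fin a) : Prop :=
  isDegenAt (barPart x r) ((ℓ : ℕ) - 1)

/-- The corank of `x`: the greatest number of preimages of `n` among operators in `supp x`. -/
def corank {a n : ℕ} (x : ZD a (n+1)) : ℕ := x.support.sup npre

/-- `u = x̌ + (x̄ ∂ℓ) σ(ℓ-1)`. -/
noncomputable def uPart {m n : ℕ} (x : ZD (m+1) (n+1)) (r ℓ : Fin (m+1))
    (h1 : 1 ≤ (ℓ : ℕ)) : ZD (m+1) (n+1) :=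
  checkPart x r
    + act (act (barPart x r) (face ℓ)) (degen ⟨(ℓ:ℕ)-1, by have := ℓ.isLt; omega⟩)

/-- `v = (x̌ ∂(ℓ-1)) σ(ℓ-1) + x̄`. -/
noncomputable def vPart {m n : ℕ} (x : ZD (m+1) (n+1)) (r ℓ : Fin (m+1))
    (h1 : 1 ≤ (ℓ : ℕ)) : ZD (m+1) (n+1) :=
  act (act (checkPart x r) (face ⟨(ℓ:ℕ)-1, by have := ℓ.isLt; omega⟩))
      (degen ⟨(ℓ:ℕ)-1, by have := ℓ.isLt; omega⟩)
    + barPart x r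

/-- The parent `w = x̌ σℓ + x̄ σ(ℓ-1)`. -/
noncomputable def parent {m n : ℕ} (x : ZD (m+1) (n+1)) (r ℓ : Fin (m+1)) :
    ZD (m+2) (n+1) :=
  act (checkPart x r) (degen ℓ)
    + act (barPart x r) (degen ⟨(ℓ:ℕ)-1, by have := ℓ.isLt; omega⟩)

/-- Bilinear extension of composition: `(x ∘ y)_γ = Σ_{α∘β = γ} x_α · y_β`. -/
noncomputable def zcomp {p m n : ℕ} (x : ZD m n) (y : ZD p m) : ZD p n :=
  x.sum fun α c => c • Finsupp.mapDomain (fun β => α.comp β) y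

theorem act_act {a b c d : ℕ} (x : ZD c d) (β : Fin b →o Fin c) (δ : Fin a →o Fin b) :
    act (act x β) δ = act x (β.comp δ) := by
  unfold act
  rw [← Finsupp.mapDomain_comp]
  rfl

theorem act_id {b c : ℕ} (x : ZD b c) : act x OrderHom.id = x :=
  Finsupp.mapDomain_id

theorem act_add {a b c : ℕ} (x y : ZD b c) (β : Fin a →o Fin b) :
    act (x + y) β = act x β + act y β :=
  Finsupp.mapDomain_add

theorem act_sub {a b c : ℕ} (x y : ZD b c) (β : Fin a →o Fin b) :
    act (x - y) β = act x β - act y β :=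
  map_sub (Finsupp.mapDomain.addMonoidHom fun α : Fin b →o Fin c => α.comp β) x y

theorem sum_act {a b c : ℕ} (x : ZD b c) (β : Fin a →o Fin b) :
    ((act x β).sum fun _ c => c) = x.sum fun _ c => c :=
  Finsupp.sum_mapDomain_index (fun _ => rfl) (fun _ _ _ => rfl)

/-- If `β` is not injective then no composite `α ∘ β` is, so `xβ` has no coefficient at an
injective operator. -/
theorem act_apply_eq_zero {a b c : ℕ} (x : ZD b c) (β : Fin a →o Fin b) (γ : Fin a →o Fin c)
    (hβ : ¬ Function.Injective β) (hγ : Function.Injective γ) : act x β γ = 0 := by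
  apply Finsupp.mapDomain_of_notMem_range
  rintro ⟨α, rfl⟩
  exact hβ (Function.Injective.of_comp (f := α) hγ)

/-- Condition (O2) holds for non-injective `β` as well. -/
theorem memO.nonneg {b c p : ℕ} {x : ZD b c} (hx : memO x) (β : Fin (p+1) →o Fin b)
    (γ : Fin (p+1) →o Fin c) (hγ : Function.Injective γ) : 0 ≤ act x β γ := by
  by_cases hβ : Function.Injective β
  · exact hx.2 p β γ hβ hγ
  · exact (act_apply_eq_zero x β γ hβ hγ).ge

theorem memO.act {a b c : ℕ} {x : ZD b c} (hx : memO x) (β : Fin a →o Fin b) :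
    memO (act x β) := by
  refine ⟨(sum_act x β).trans hx.1, fun p δ γ _ hγ => ?_⟩
  rw [act_act]
  exact hx.nonneg _ γ hγ

theorem face_val {m : ℕ} (i : Fin (m+1)) (j : Fin m) :
    (face i j : ℕ) = if (j : ℕ) < i then (j : ℕ) else j + 1 := by
  change ((i.succAbove j : Fin (m+1)) : ℕ) = _
  simp only [Fin.succAbove, Fin.lt_def, Fin.val_castSucc]
  split_ifs <;> rfl

theorem degen_val {m : ℕ} (i : Fin m) (j : Fin (m+1)) :
    (degen i j : ℕ) = if (i : ℕ) < j then (j : ℕ) - 1 else j := by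
  change ((i.predAbove j : Fin m) : ℕ) = _
  simp only [Fin.predAbove, Fin.lt_def, Fin.val_castSucc]
  split_ifs <;> rfl

theorem memO_fill {m n : ℕ} {x y : ZD (m+1) (n+1)} (hx : memO x) (hy : memO y)
    (k : ℕ) (h1 : 1 ≤ k) (h2 : k ≤ m)
    (hxy : act x (face ⟨k-1, by omega⟩) = act y (face ⟨k, by omega⟩)) :
    memO (fill k h1 h2 x y) := by
  constructor
  · unfold fill
    rw [Finsupp.sum_add_index' (fun _ => rfl) (fun _ _ _ => rfl),
      Finsupp.sum_sub_index (fun _ _ _ => rfl)]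
    simp only [sum_act, hx.1, hy.1]
    norm_num
  · intro p β γ _ hγ
    unfold fill
    rw [act_add, act_sub, Finsupp.add_apply, Finsupp.sub_apply]
    by_cases hhi : ∃ j, (β j : ℕ) = k + 1
    · by_cases hlo : ∃ j, (β j : ℕ) = k - 1
      · obtain ⟨i, hi⟩ := hhi
        obtain ⟨j, hj⟩ := hlo
        have hz : act (act (act (act x (face ⟨k-1, by omega⟩)) (degen ⟨k-1, by omega⟩))
            (degen ⟨k-1, by omega⟩)) β γ = 0 := by
          rw [act_act, act_act]
          refine act_apply_eq_zero _ _ γ (fun hinj => ?_) hγ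
          have hij : i = j := by
            apply hinj
            apply Fin.ext
            simp only [OrderHom.comp_coe, Function.comp_apply, degen_val, hi, hj]
            split_ifs <;> omega
          rw [hij] at hi
          omega
        have hX := (hx.act (degen ⟨k, by omega⟩)).nonneg β γ hγ
        have hY := (hy.act (degen ⟨k-1, by omega⟩)).nonneg β γ hγ
        omega
      · have hc : act (act (act (act x (face ⟨k-1, by omega⟩)) (degen ⟨k-1, by omega⟩))
            (degen ⟨k-1, by omega⟩)) β = act (act x (degen ⟨k, by omega⟩)) β := by
          simp only [act_act]
          congr 1
          ext j
          have hj : (β j : ℕ) ≠ k - 1 := fun h => hlo ⟨j, h⟩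
          simp only [OrderHom.comp_coe, Function.comp_apply, degen_val, face_val]
          split_ifs <;> omega
        have hY := (hy.act (degen ⟨k-1, by omega⟩)).nonneg β γ hγ
        rw [hc]
        omega
    · have hc : act (act (act (act x (face ⟨k-1, by omega⟩)) (degen ⟨k-1, by omega⟩))
          (degen ⟨k-1, by omega⟩)) β = act (act y (degen ⟨k-1, by omega⟩)) β := by
        rw [hxy]
        simp only [act_act]
        congr 1
        ext j
        have hj : (β j : ℕ) ≠ k + 1 := fun h => hhi ⟨j, h⟩
        simp only [OrderHom.comp_coe, Function.comp_apply, degen_val, face_val]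
        split_ifs <;> omega
      have hX := (hx.act (degen ⟨k, by omega⟩)).nonneg β γ hγ
      rw [hc]
      omega

theorem act_fill_face {m n : ℕ} (x y : ZD (m+1) (n+1)) (k : ℕ) (h1 : 1 ≤ k) (h2 : k ≤ m) :
    act (fill k h1 h2 x y) (face ⟨k, by omega⟩) = paste k h1 h2 x y := by
  have e1 : (degen ⟨k, by omega⟩ : Fin (m+2) →o Fin (m+1)).comp (face ⟨k, by omega⟩)
      = OrderHom.id := by
    ext j
    simp only [OrderHom.comp_coe, Function.comp_apply, degen_val, face_val, OrderHom.id_coe, id]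
    split_ifs <;> omega
  have e2 : (degen ⟨k-1, by omega⟩ : Fin (m+2) →o Fin (m+1)).comp (face ⟨k, by omega⟩)
      = OrderHom.id := by
    ext j
    simp only [OrderHom.comp_coe, Function.comp_apply, degen_val, face_val, OrderHom.id_coe, id]
    split_ifs <;> omega
  unfold fill paste
  rw [act_add, act_sub, act_act x, e1, act_act y, e2, act_act _ (degen _) (face ⟨k, _⟩), e2,
    act_id, act_id, act_id]

/-- `O(−,n)` is closed under the operations `▽ₖ` and `⋆ₖ`. -/
theorem stmt6 (m n : ℕ) (x y : ZD (m+1) (n+1)) (hx : memO x) (hy : memO y)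
    (k : ℕ) (h1 : 1 ≤ k) (h2 : k ≤ m)
    (hxy : act x (face ⟨k-1, by omega⟩) = act y (face ⟨k, by omega⟩)) :
    memO (fill k h1 h2 x y) ∧ memO (paste k h1 h2 x y) := by
  have hw := memO_fill hx hy k h1 h2 hxy
  refine ⟨hw, ?_⟩
  rw [← act_fill_face]
  exact hw.act _
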